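/- Let Q : (0, ∞) → ℝ be the strictly quasiconvex generator Q(x) = log x, and let 0 < θ ≤ θ'. Then, as α tends to 1 from the left, the scaled skewed quasiconvex Jensen divergence (1/(α(1−α)))·(max(log θ, log θ') − log((1−α)·θ + α·θ')) tends to 1 − θ/θ'; that is, the quasiconvex Bregman divergence for the logarithmic generator is 1 − θ/θ' when θ ≤ θ'. -/

import Mathlib

open Filter Set Real

theorem quasiconvex_bregman_log_generator
    (θ θ' : ℝ) (hθ : 0 < θ) (hle : θ ≤ θ') :
    Tendsto
      (fun α : ℝ =>
        (1 / (α * (1 - α))) * (max (Real.log θ) (Real.log θ')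
          - Real.log ((1 - α) * θ + α * θ')))
      (nhdsWithin 1 (Set.Ioo (0 : ℝ) 1))
      (nhds (1 - θ / θ')) := by
  have hθ' : 0 < θ' := hθ.trans_le hle
  have hmax : max (Real.log θ) (Real.log θ') = Real.log θ' :=
    max_eq_right (Real.log_le_log hθ hle)
  have hd0 : HasDerivAt (fun α : ℝ => (1 - α) * θ + α * θ') (-1 * θ + 1 * θ') 1 :=
    (((hasDerivAt_id (1 : ℝ)).const_sub 1).mul_const θ).add
      ((hasDerivAt_id (1 : ℝ)).mul_const θ')
  have hd := hd0.log (by simpa using hθ'.ne')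
  have hs := hasDerivAt_iff_tendsto_slope.1 hd
  have hs' := hs.mono_left (nhdsWithin_mono (1 : ℝ)
    (show Set.Ioo (0 : ℝ) 1 ⊆ {1}ᶜ from fun x hx => by simpa using hx.2.ne))
  have hinv : Tendsto (fun α : ℝ => α⁻¹) (nhdsWithin 1 (Set.Ioo (0 : ℝ) 1)) (nhds (1 : ℝ)⁻¹) :=
    (tendsto_inv₀ one_ne_zero).mono_left nhdsWithin_le_nhds
  have hp := hinv.mul hs'
  have hval : (1 : ℝ)⁻¹ * ((-1 * θ + 1 * θ') / ((1 - 1) * θ + 1 * θ')) = 1 - θ / θ' := by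
    have := hθ'.ne'
    simp
    field_simp
    ring
  rw [hval] at hp
  refine hp.congr' ?_
  filter_upwards [self_mem_nhdsWithin] with α hα
  have h1 : α ≠ 0 := hα.1.ne'
  have h2 : 1 - α ≠ 0 := (sub_pos.2 hα.2).ne'
  have h3 : α - 1 ≠ 0 := (sub_neg.2 hα.2).ne
  rw [hmax, slope_def_field]
  simp only [sub_self, zero_mul, zero_add, one_mul]
  rw [← neg_sub α 1]
  field_simp
  ring
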